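/- arXiv:2401.09586 — 4 statements merged into one kernel-verified Lean document; each statement's English description precedes it below -/
import Mathlib

section
/- For every real p ≥ 2 there exists a constant C > 0, depending only on p, such that g_p(s + t) ≤ C (g_p(s) + t^2) for every s ≥ 0 and every t ∈ [0, 1]. -/
/-- For `p > 1`, `g_p(t) = t^2/2` if `0 ≤ t ≤ 1` and `g_p(t) = t^p/p + 1/2 - 1/p` if `t > 1`. -/
noncomputable def gp (p t : ℝ) : ℝ := if t ≤ 1 then t ^ 2 / 2 else t ^ p / p + 1 / 2 - 1 / p

/-- For every real `p ≥ 2` there exists a constant `C > 0`, depending only on `p`, such that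
`g_p(s + t) ≤ C (g_p(s) + t^2)` for every `s ≥ 0` and every `t ∈ [0, 1]`. -/
theorem stmt2 (p : ℝ) (hp : 2 ≤ p) :
    ∃ C : ℝ, 0 < C ∧ ∀ s : ℝ, 0 ≤ s → ∀ t : ℝ, t ∈ Set.Icc (0 : ℝ) 1 →
      gp p (s + t) ≤ C * (gp p s + t ^ 2) := by
  have hp0 : 0 < p := by linarith
  have hA : (4 : ℝ) ≤ 2 ^ p := by
    have h := Real.rpow_le_rpow_of_exponent_le (x := 2) (by norm_num) hp
    have h2 : (2 : ℝ) ^ (2 : ℝ) = 4 := by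
      rw [show (2 : ℝ) = ((2 : ℕ) : ℝ) by norm_num, Real.rpow_natCast]; norm_num
    linarith
  have hip : 0 < 1 / p := by positivity
  have hip2 : 1 / p ≤ 1 / 2 := one_div_le_one_div_of_le (by norm_num) hp
  refine ⟨4 * 2 ^ p, by positivity, ?_⟩
  generalize hAe : (2 : ℝ) ^ p = A at hA ⊢
  rintro s hs t ⟨ht0, ht1⟩
  unfold gp
  by_cases h1 : s + t ≤ 1
  · have h2 : s ≤ 1 := by linarith
    rw [if_pos h1, if_pos h2]
    nlinarith [sq_nonneg (s - t), mul_nonneg (by linarith : (0 : ℝ) ≤ A - 4) (by positivity : 0 ≤ s ^ 2 / 2 + t ^ 2)]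
  · rw [if_neg h1]
    push Not at h1
    by_cases h2 : s ≤ 1
    · rw [if_pos h2]
      have h3 : (s + t) ^ p ≤ A := by
        rw [← hAe]
        exact Real.rpow_le_rpow (by linarith) (by linarith) hp0.le
      have h4 : (s + t) ^ p / p ≤ A * (1 / 2) := by
        rw [div_eq_mul_one_div]
        exact mul_le_mul h3 hip2 hip.le (by linarith)
      have h5 : 1 / 4 ≤ s ^ 2 / 2 + t ^ 2 := by
        nlinarith [sq_nonneg (s - t), sq_nonneg t]
      nlinarith [mul_le_mul_of_nonneg_left h5 (by linarith : (0 : ℝ) ≤ A)]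
    · rw [if_neg h2]
      push Not at h2
      have h3 : (s + t) ^ p ≤ A * s ^ p := by
        rw [← hAe, ← Real.mul_rpow (by norm_num) hs]
        exact Real.rpow_le_rpow (by linarith) (by linarith) hp0.le
      have h4 : (s + t) ^ p / p ≤ A * (s ^ p / p) := by
        rw [← mul_div_assoc]
        exact div_le_div_of_nonneg_right h3 hp0.le
      have h5 : 0 ≤ s ^ p / p := by positivity
      have h6 : 0 ≤ A * (s ^ p / p) := by positivity
      have h7 : 0 ≤ A * t ^ 2 := by positivity
      have h8 : 0 ≤ (A - 1) * (1 / 2 - 1 / p) :=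
        mul_nonneg (by linarith) (by linarith)
      have h9 : 0 ≤ A * (1 / 2 - 1 / p) :=
        mul_nonneg (by linarith) (by linarith)
      generalize s ^ p / p = X at *
      generalize 1 / p = Y at *
      nlinarith
end

section
/- Let d ≥ 2 and let Φ : ℝ^{d×d} → ℝ be twice continuously differentiable on a neighborhood of the identity matrix I, nonnegative, with Φ(R) = 0 for all R ∈ SO(d), and frame-indifferent, i.e. Φ(QF) = Φ(F) for all Q ∈ SO(d) and all F in the domain where both sides are defined. Then the second derivative of Φ at I, viewed as a quadratic form, satisfies D²Φ(I)[F, F] = D²Φ(I)[F_sym, F_sym] for every F ∈ ℝ^{d×d}, where F_sym = (F + Fᵀ)/2; in particular D²Φ(I)[F, F] = 0 whenever F is antisymmetric (Fᵀ = −F). -/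
open Matrix

attribute [local instance] Matrix.frobeniusNormedAddCommGroup Matrix.frobeniusNormedSpace

/-- `SO(d)`: real `d×d` matrices `Q` with `QᵀQ = I` and `det Q = 1`. -/
def SOd (d : ℕ) : Set (Matrix (Fin d) (Fin d) ℝ) :=
  {Q | Qᵀ * Q = 1 ∧ Q.det = 1}

section aux
attribute [local instance] Matrix.frobeniusNormedRing Matrix.frobeniusNormedAlgebra

theorem aux_exp_mem (d : ℕ) (W : Matrix (Fin d) (Fin d) ℝ) (hW : Wᵀ = -W) :
    NormedSpace.exp W ∈ SOd d := by
  have key : ∀ V : Matrix (Fin d) (Fin d) ℝ, Vᵀ = -V →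
      (NormedSpace.exp V)ᵀ * NormedSpace.exp V = 1 := by
    intro V hV
    rw [← Matrix.exp_transpose, hV, ← Matrix.exp_add_of_commute _ _ (Commute.neg_left (Commute.refl V))]
    simp
  refine ⟨key W hW, ?_⟩
  have h2 : W = ((1:ℝ)/2) • W + ((1:ℝ)/2) • W := by
    rw [← add_smul]; norm_num
  have h3 := key (((1:ℝ)/2) • W) (by rw [Matrix.transpose_smul, hW, smul_neg])
  have h4 := congrArg Matrix.det h3
  rw [Matrix.det_mul, Matrix.det_transpose, Matrix.det_one] at h4
  rw [h2, Matrix.exp_add_of_commute _ _ (Commute.refl _), Matrix.det_mul, h4]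

theorem aux_deriv (d : ℕ) (W : Matrix (Fin d) (Fin d) ℝ) :
    HasDerivAt (fun t : ℝ => NormedSpace.exp (t • W)) W 0 := by
  have := hasDerivAt_exp_smul_const (𝕂 := ℝ) W (0:ℝ)
  rw [zero_smul, NormedSpace.exp_zero, one_mul] at this
  exact this

end aux

theorem aux_abs {E : Type*} [NormedAddCommGroup E] [NormedSpace ℝ E] (Φ : E → ℝ) (p : E)
    (hat : ContDiffAt ℝ 2 Φ p) (K : Set E) (hnonneg : ∀ F, 0 ≤ Φ F) (hK : ∀ R ∈ K, Φ R = 0)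
    (S W : E) (γ : ℝ → E) (h1 : HasDerivAt γ W 0) (hp : γ 0 = p) (hγ : ∀ t, γ t ∈ K) :
    iteratedFDeriv ℝ 2 Φ p ![S + W, S + W] = iteratedFDeriv ℝ 2 Φ p ![S, S] := by
  have hsymm : IsSymmSndFDerivAt ℝ Φ p := hat.isSymmSndFDerivAt (by simp)
  have hcrit : ∀ R ∈ K, fderiv ℝ Φ R = 0 := by
    intro R hR
    apply IsLocalMin.fderiv_eq_zero
    refine Filter.Eventually.of_forall fun x => ?_
    rw [hK R hR]; exact hnonneg x
  have hdiff : DifferentiableAt ℝ (fderiv ℝ Φ) p :=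
    (hat.fderiv_right (m := 1) (by norm_num)).differentiableAt (by norm_num)
  have h0 : fderiv ℝ (fderiv ℝ Φ) p W = 0 := by
    have h2 : HasFDerivAt (fderiv ℝ Φ) (fderiv ℝ (fderiv ℝ Φ) p) (γ 0) := by
      rw [hp]; exact hdiff.hasFDerivAt
    have h3 := h2.comp_hasDerivAt (0:ℝ) h1
    have h4 : (fderiv ℝ Φ) ∘ γ = fun _ => 0 := by
      funext t
      exact hcrit _ (hγ t)
    rw [h4] at h3
    exact h3.unique (hasDerivAt_const _ _)
  simp only [iteratedFDeriv_two_apply, Matrix.cons_val_zero, Matrix.cons_val_one]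
  have h5 : fderiv ℝ (fderiv ℝ Φ) p S W = 0 := by
    rw [hsymm.eq S W, h0]; rfl
  rw [map_add (fderiv ℝ (fderiv ℝ Φ) p), h0, add_zero, map_add, h5, add_zero]

theorem aux_zero {E : Type*} [NormedAddCommGroup E] [NormedSpace ℝ E] (Φ : E → ℝ) (p : E) :
    iteratedFDeriv ℝ 2 Φ p ![0, 0] = 0 := by
  simp [iteratedFDeriv_two_apply]

/-- Let `d ≥ 2` and let `Φ : ℝ^{d×d} → ℝ` be twice continuously differentiable on a neighborhood
of the identity, nonnegative, vanishing on `SO(d)`, and frame-indifferent. Then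
`D²Φ(I)[F, F] = D²Φ(I)[F_sym, F_sym]` for every `F`, where `F_sym = (F + Fᵀ)/2`; in particular
`D²Φ(I)[F, F] = 0` whenever `F` is antisymmetric. -/
theorem stmt6 (d : ℕ) (hd : 2 ≤ d) (Φ : Matrix (Fin d) (Fin d) ℝ → ℝ)
    (U : Set (Matrix (Fin d) (Fin d) ℝ)) (hUopen : IsOpen U)
    (h1U : (1 : Matrix (Fin d) (Fin d) ℝ) ∈ U) (hC2 : ContDiffOn ℝ 2 Φ U)
    (hnonneg : ∀ F, 0 ≤ Φ F)
    (hSO : ∀ R ∈ SOd d, Φ R = 0)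
    (hframe : ∀ Q ∈ SOd d, ∀ F : Matrix (Fin d) (Fin d) ℝ, Φ (Q * F) = Φ F) :
    ∀ F : Matrix (Fin d) (Fin d) ℝ,
      iteratedFDeriv ℝ 2 Φ 1 ![F, F] =
        iteratedFDeriv ℝ 2 Φ 1 ![((1:ℝ)/2) • (F + Fᵀ), ((1:ℝ)/2) • (F + Fᵀ)] ∧
      (Fᵀ = -F → iteratedFDeriv ℝ 2 Φ 1 ![F, F] = 0) := by
  have hat : ContDiffAt ℝ 2 Φ 1 := hC2.contDiffAt (hUopen.mem_nhds h1U)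
  have hB : ∀ S W : Matrix (Fin d) (Fin d) ℝ, Wᵀ = -W →
      iteratedFDeriv ℝ 2 Φ 1 ![S + W, S + W] = iteratedFDeriv ℝ 2 Φ 1 ![S, S] := by
    intro S W hW
    exact aux_abs Φ 1 hat (SOd d) hnonneg hSO S W (fun t : ℝ => NormedSpace.exp (t • W))
      (aux_deriv d W) (by simp)
      (fun t => aux_exp_mem d _ (by rw [Matrix.transpose_smul, hW, smul_neg]))
  intro F
  constructor
  · have hWa : (((1:ℝ)/2) • (F - Fᵀ))ᵀ = -(((1:ℝ)/2) • (F - Fᵀ)) := by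
      rw [Matrix.transpose_smul, Matrix.transpose_sub, Matrix.transpose_transpose, ← smul_neg,
        neg_sub]
    have hdec : ((1:ℝ)/2) • (F + Fᵀ) + ((1:ℝ)/2) • (F - Fᵀ) = F := by
      rw [← smul_add, add_add_sub_cancel, ← two_smul ℝ F, smul_smul]; norm_num
    have := hB (((1:ℝ)/2) • (F + Fᵀ)) _ hWa
    rw [hdec] at this
    exact this
  · intro hF
    have := hB 0 F hF
    rw [zero_add] at this
    rw [this]
    exact aux_zero Φ 1
end

section
/- Let d ≥ 2 and p ≥ 2, and let Φ : ℝ^{d×d} → ℝ be twice continuously differentiable on a neighborhood of the identity matrix I, with Φ(I) = 0, and satisfying Φ(F) ≥ g_p(dist(F, SO(d))) for every F ∈ ℝ^{d×d}. Then for every symmetric matrix S ∈ ℝ^{d×d} one has D²Φ(I)[S, S] ≥ |S|², where |S| is the Frobenius norm. -/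
open Matrix

attribute [local instance] Matrix.frobeniusNormedAddCommGroup Matrix.frobeniusNormedSpace

lemma frob_sq {d : ℕ} (A : Matrix (Fin d) (Fin d) ℝ) : ‖A‖ ^ 2 = (Aᵀ * A).trace := by
  rw [Matrix.frobenius_norm_def, ← Real.sqrt_eq_rpow, Real.sq_sqrt (by positivity),
    Finset.sum_comm]
  simp [Matrix.trace, Matrix.mul_apply, sq]

lemma dist_SOd {d : ℕ} (T Q : Matrix (Fin d) (Fin d) ℝ) (hT : Tᵀ = T) (hT1 : ‖T‖ ≤ 1)
    (hQ : Q ∈ SOd d) : ‖T‖ ≤ ‖1 + T - Q‖ := by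
  obtain ⟨A, hA⟩ : ∃ A, A = 1 - Q := ⟨_, rfl⟩
  have e : 1 + T - Q = A + T := by rw [hA]; abel
  have hAA : Aᵀ * A = A + Aᵀ := by
    rw [hA]; simp [Matrix.mul_sub, Matrix.sub_mul, hQ.1]; abel
  have t1 : (A * T).trace = (Aᵀ * T).trace := by
    rw [← Matrix.trace_transpose (A * T), Matrix.transpose_mul, hT, Matrix.trace_mul_comm]
  have t2 : (T * A).trace = (Aᵀ * T).trace := by rw [Matrix.trace_mul_comm, t1]
  have h1 : ‖A + T‖ ^ 2 = ‖A‖ ^ 2 + 2 * (Aᵀ * T).trace + ‖T‖ ^ 2 := by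
    rw [frob_sq, frob_sq, frob_sq]
    simp only [Matrix.transpose_add, Matrix.add_mul, Matrix.mul_add, Matrix.trace_add, hT, t2]
    ring
  have h3 : (Aᵀ * (A * T)).trace = 2 * (Aᵀ * T).trace := by
    rw [← Matrix.mul_assoc, hAA, Matrix.add_mul, Matrix.trace_add, t1]; ring
  have h2 : ‖A + A * T‖ ^ 2 = ‖A‖ ^ 2 + 4 * (Aᵀ * T).trace + ‖A * T‖ ^ 2 := by
    have h4 : ((A * T)ᵀ * A).trace = 2 * (Aᵀ * T).trace := by
      rw [← Matrix.trace_transpose, Matrix.transpose_mul, Matrix.transpose_transpose, h3]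
    rw [frob_sq, frob_sq, frob_sq]
    simp only [Matrix.transpose_add, Matrix.add_mul, Matrix.mul_add, Matrix.trace_add, h3, h4]
    ring
  have h5 : ‖A * T‖ ≤ ‖A‖ :=
    (Matrix.frobenius_norm_mul A T).trans (mul_le_of_le_one_right (norm_nonneg _) hT1)
  have h6 : ‖A * T‖ ^ 2 ≤ ‖A‖ ^ 2 := by gcongr
  rw [e]
  refine le_of_sq_le_sq ?_ (norm_nonneg _)
  nlinarith [sq_nonneg ‖A + A * T‖]

lemma second_deriv_nonneg {f f' : ℝ → ℝ} {c : ℝ}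
    (hf : ∀ᶠ t in nhds 0, HasDerivAt f (f' t) t) (hf' : HasDerivAt f' c 0)
    (hmin : IsLocalMin f 0) : 0 ≤ c := by
  by_contra! hc
  have e : deriv f =ᶠ[nhds 0] f' := hf.mono fun t ht => ht.deriv
  have h2 : deriv (deriv f) 0 = c := by rw [e.deriv_eq, hf'.deriv]
  have hmax : IsLocalMax f 0 := isLocalMax_of_deriv_deriv_neg (by rw [h2]; exact hc)
    hmin.deriv_eq_zero hf.self_of_nhds.continuousAt
  have hconst : f =ᶠ[nhds 0] fun _ => f 0 := by
    filter_upwards [hmin, hmax] with t h1 h2 using le_antisymm h2 h1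
  have h3 : deriv (deriv f) 0 = 0 := by
    rw [hconst.deriv.deriv_eq]; simp
  linarith

lemma second_order {E : Type*} [NormedAddCommGroup E] [NormedSpace ℝ E] {Φ : E → ℝ} {x v : E}
    {k : ℝ} (hΦ : ContDiffAt ℝ 2 Φ x) (h0 : Φ x = 0)
    (h : ∀ᶠ t : ℝ in nhds 0, t ^ 2 * k / 2 ≤ Φ (x + t • v)) :
    k ≤ iteratedFDeriv ℝ 2 Φ x ![v, v] := by
  have hline : ∀ t : ℝ, HasDerivAt (fun t : ℝ => x + t • v) v t := fun t => by
    simpa using ((hasDerivAt_id t).smul_const v).const_add x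
  have hev : ∀ᶠ y in nhds x, DifferentiableAt ℝ Φ y :=
    (hΦ.eventually (by simp)).mono fun y hy => hy.differentiableAt (by simp)
  have ht : Filter.Tendsto (fun t : ℝ => x + t • v) (nhds 0) (nhds x) := by
    have := (hline 0).continuousAt.tendsto
    simpa using this
  have hD : DifferentiableAt ℝ (fderiv ℝ Φ) x :=
    (hΦ.fderiv_right (m := 1) (by norm_num)).differentiableAt (by simp)
  have key := second_deriv_nonneg (f := fun t => Φ (x + t • v) - t ^ 2 * k / 2)
    (f' := fun t => fderiv ℝ Φ (x + t • v) v - t * k)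
    (c := fderiv ℝ (fderiv ℝ Φ) x v v - k) ?_ ?_ ?_
  · rw [iteratedFDeriv_two_apply]
    simpa using key
  · filter_upwards [ht.eventually hev] with t hy
    have a := hy.hasFDerivAt.comp_hasDerivAt t (hline t)
    have b : HasDerivAt (fun t : ℝ => t ^ 2 * k / 2) (t * k) t := by
      have := ((hasDerivAt_pow 2 t).mul_const k).div_const 2
      have e : ((2 : ℕ) : ℝ) * t ^ (2 - 1) * k / 2 = t * k := by norm_num; ring
      rwa [e] at this
    exact a.sub b
  · have hD' : HasFDerivAt (fderiv ℝ Φ) (fderiv ℝ (fderiv ℝ Φ) x) (x + (0 : ℝ) • v) := by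
      simpa using hD.hasFDerivAt
    have a0 : HasDerivAt (fun t : ℝ => fderiv ℝ Φ (x + t • v))
        (fderiv ℝ (fderiv ℝ Φ) x v) 0 := hD'.comp_hasDerivAt 0 (hline 0)
    have a : HasDerivAt (fun t : ℝ => fderiv ℝ Φ (x + t • v) v)
        (fderiv ℝ (fderiv ℝ Φ) x v v) 0 :=
      (ContinuousLinearMap.apply ℝ ℝ v).hasFDerivAt.comp_hasDerivAt 0 a0
    have b : HasDerivAt (fun t : ℝ => t * k) k 0 := by
      simpa using (hasDerivAt_id (0 : ℝ)).mul_const k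
    exact a.sub b
  · filter_upwards [h] with t ht
    simp [h0]
    linarith

/-- Let `d ≥ 2`, `p ≥ 2`, and let `Φ` be twice continuously differentiable on a neighborhood of
the identity, with `Φ(I) = 0` and `Φ(F) ≥ g_p(dist(F, SO(d)))` (Frobenius distance) for every
`F`. Then for every symmetric `S` one has `D²Φ(I)[S, S] ≥ |S|²` (Frobenius norm). -/
theorem stmt7 (d : ℕ) (hd : 2 ≤ d) (p : ℝ) (hp : 2 ≤ p)
    (Φ : Matrix (Fin d) (Fin d) ℝ → ℝ)
    (U : Set (Matrix (Fin d) (Fin d) ℝ)) (hUopen : IsOpen U)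
    (h1U : (1 : Matrix (Fin d) (Fin d) ℝ) ∈ U) (hC2 : ContDiffOn ℝ 2 Φ U)
    (hΦ1 : Φ 1 = 0)
    (hcoer : ∀ F : Matrix (Fin d) (Fin d) ℝ, gp p (Metric.infDist F (SOd d)) ≤ Φ F)
    (S : Matrix (Fin d) (Fin d) ℝ) (hS : Sᵀ = S) :
    ‖S‖ ^ 2 ≤ iteratedFDeriv ℝ 2 Φ 1 ![S, S] := by
  refine second_order (hC2.contDiffAt (hUopen.mem_nhds h1U)) hΦ1 ?_
  have hsm : ∀ᶠ t : ℝ in nhds 0, ‖t • S‖ ≤ 1 := by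
    have hc : Filter.Tendsto (fun t : ℝ => |t| * ‖S‖) (nhds 0) (nhds (|0| * ‖S‖)) :=
      (Continuous.tendsto (by fun_prop) 0)
    have : ∀ᶠ t : ℝ in nhds 0, |t| * ‖S‖ < 1 := hc.eventually_lt_const (by simp)
    filter_upwards [this] with t ht
    rw [norm_smul, Real.norm_eq_abs]
    exact ht.le
  filter_upwards [hsm] with t ht
  have hone : (1 : Matrix (Fin d) (Fin d) ℝ) ∈ SOd d := by simp [SOd]
  have hge : ‖t • S‖ ≤ Metric.infDist (1 + t • S) (SOd d) := by
    refine (Metric.le_infDist ⟨1, hone⟩).2 fun Q hQ => ?_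
    rw [dist_eq_norm]
    exact dist_SOd _ _ (by rw [Matrix.transpose_smul, hS]) ht hQ
  have hle : Metric.infDist (1 + t • S) (SOd d) ≤ 1 := by
    refine (Metric.infDist_le_dist_of_mem hone).trans ?_
    rw [dist_eq_norm, add_sub_cancel_left]
    exact ht
  refine le_trans ?_ (hcoer _)
  rw [gp, if_pos hle]
  have : t ^ 2 * ‖S‖ ^ 2 = ‖t • S‖ ^ 2 := by
    rw [norm_smul, mul_pow, Real.norm_eq_abs, sq_abs]
  rw [this]
  gcongr
end

section
/- Let d ≥ 1, let Ω ⊂ ℝ^d be a bounded open set, and let y : closure(Ω) → ℝ^d be continuous. Let x ∈ Ω be such that |y(z) − z| < dist(x, ∂Ω) for every z ∈ closure(Ω). Then x ∈ y(Ω). -/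
open MeasureTheory Set Metric

theorem aux_sigma_lip {E : Type*} [NormedAddCommGroup E] [NormedSpace ℝ E] (c : ℝ) (hc : 0 < c) :
    LipschitzWith (Real.toNNReal (2 / c)) (fun y : E => (max ‖y‖ c)⁻¹ • y) := by
  refine LipschitzWith.of_dist_le_mul fun a b => ?_
  rw [Real.coe_toNNReal _ (by positivity), dist_eq_norm, dist_eq_norm]
  set A := max ‖a‖ c with hA
  set B := max ‖b‖ c with hB
  have hAc : c ≤ A := le_max_right _ _
  have hBc : c ≤ B := le_max_right _ _
  have hA0 : 0 < A := lt_of_lt_of_le hc hAc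
  have hB0 : 0 < B := lt_of_lt_of_le hc hBc
  have hbB : ‖b‖ ≤ B := le_max_left _ _
  have e : A⁻¹ • a - B⁻¹ • b = A⁻¹ • (a - b) + (A⁻¹ - B⁻¹) • b := by
    rw [smul_sub, sub_smul]; abel
  have h1 : |B - A| ≤ ‖a - b‖ := by
    have := abs_max_sub_max_le_abs ‖b‖ ‖a‖ c
    refine this.trans ?_
    rw [norm_sub_rev]
    exact abs_norm_sub_norm_le b a
  have h2 : |A⁻¹ - B⁻¹| * ‖b‖ ≤ A⁻¹ * ‖a - b‖ := by
    have : A⁻¹ - B⁻¹ = A⁻¹ * ((B - A) * B⁻¹) := by field_simp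
    rw [this, abs_mul, abs_mul, abs_of_pos (inv_pos.2 hA0), abs_of_pos (inv_pos.2 hB0)]
    rw [mul_assoc]
    gcongr
    have : B⁻¹ * ‖b‖ ≤ 1 := by
      rw [inv_mul_le_iff₀ hB0]; simpa using hbB
    calc |B - A| * B⁻¹ * ‖b‖ = |B - A| * (B⁻¹ * ‖b‖) := by ring
      _ ≤ ‖a - b‖ * 1 := by gcongr
      _ = _ := by ring
  have h3 : A⁻¹ ≤ c⁻¹ := inv_anti₀ hc hAc
  rw [e]
  calc _ ≤ ‖A⁻¹ • (a - b)‖ + ‖(A⁻¹ - B⁻¹) • b‖ := norm_add_le _ _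
    _ = A⁻¹ * ‖a - b‖ + |A⁻¹ - B⁻¹| * ‖b‖ := by
      rw [norm_smul, norm_smul, Real.norm_eq_abs, Real.norm_eq_abs, abs_of_pos (inv_pos.2 hA0)]
    _ ≤ A⁻¹ * ‖a - b‖ + A⁻¹ * ‖a - b‖ := by gcongr
    _ ≤ c⁻¹ * ‖a - b‖ + c⁻¹ * ‖a - b‖ := by gcongr
    _ = 2 / c * ‖a - b‖ := by ring

theorem aux_det_interp {d : ℕ} (A : EuclideanSpace ℝ (Fin d) →L[ℝ] EuclideanSpace ℝ (Fin d))
    (s : Finset ℕ) (v : ℕ → ℝ) (hv : Set.InjOn v s) (hs : d < s.card) :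
    (ContinuousLinearMap.id ℝ (EuclideanSpace ℝ (Fin d)) + A).det =
      ∑ i ∈ s, (ContinuousLinearMap.id ℝ (EuclideanSpace ℝ (Fin d)) + v i • A).det * (Lagrange.basis s v i).eval 1 := by
  let b := (EuclideanSpace.basisFun (Fin d) ℝ).toBasis
  let M := LinearMap.toMatrix b b A.toLinearMap
  let p : Polynomial ℝ := ((Polynomial.X : Polynomial ℝ) • M.map (Polynomial.C : ℝ →+* Polynomial ℝ)
    + (1 : Matrix (Fin d) (Fin d) ℝ).map (Polynomial.C : ℝ →+* Polynomial ℝ)).det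
  have hp : ∀ t : ℝ, p.eval t = (ContinuousLinearMap.id ℝ (EuclideanSpace ℝ (Fin d)) + t • A).det := by
    intro t
    rw [ContinuousLinearMap.det, ← LinearMap.det_toMatrix b]
    simp only [p]
    rw [← Polynomial.coe_evalRingHom, RingHom.map_det]
    congr 1
    ext i j
    simp [M, LinearMap.toMatrix_apply, Matrix.one_apply, b, Pi.single_apply, add_comm, eq_comm]
    split_ifs <;> simp [mul_comm]
  have hdeg : p.degree < s.card := by
    refine lt_of_le_of_lt Polynomial.degree_le_natDegree ?_
    have := Polynomial.natDegree_det_X_add_C_le M 1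
    rw [Fintype.card_fin] at this
    exact_mod_cast lt_of_le_of_lt this hs
  have h := Lagrange.eq_interpolate hv hdeg
  have h1 := hp 1
  rw [one_smul] at h1
  rw [← h1, h, Lagrange.interpolate_apply, Polynomial.eval_finset_sum]
  refine Finset.sum_congr rfl fun i _ => ?_
  rw [Polynomial.eval_mul, Polynomial.eval_C, hp]

theorem aux_det_ne {E : Type*} [NormedAddCommGroup E] [NormedSpace ℝ E] [FiniteDimensional ℝ E]
    (T : E →L[ℝ] E) (hT : ‖T‖ < 1) : (ContinuousLinearMap.id ℝ E + T).det ≠ 0 := by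
  intro h
  have := LinearMap.bot_lt_ker_of_det_eq_zero h
  obtain ⟨v, hv, hv0⟩ := (Submodule.ne_bot_iff _).1 this.ne'
  have h1 : v + T v = 0 := by simpa using hv
  have h2 : ‖v‖ = ‖T v‖ := by rw [eq_neg_of_add_eq_zero_left h1, norm_neg, map_neg, ← norm_neg (T _)]; simp [eq_neg_of_add_eq_zero_right h1]
  have h3 := T.le_opNorm v
  have : 0 < ‖v‖ := norm_pos_iff.2 hv0
  nlinarith

theorem aux_det_pos {E : Type*} [NormedAddCommGroup E] [NormedSpace ℝ E] [FiniteDimensional ℝ E]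
    (T : E →L[ℝ] E) (hT : ‖T‖ < 1) : 0 < (ContinuousLinearMap.id ℝ E + T).det := by
  by_contra! hneg
  have hc : ContinuousOn (fun t : ℝ => (ContinuousLinearMap.id ℝ E + t • T).det) (Icc 0 1) := by
    apply Continuous.continuousOn
    exact ContinuousLinearMap.continuous_det.comp (by fun_prop)
  have h := intermediate_value_Icc' (zero_le_one) hc
  have : (0 : ℝ) ∈ Icc ((ContinuousLinearMap.id ℝ E + (1 : ℝ) • T).det)
    ((ContinuousLinearMap.id ℝ E + (0 : ℝ) • T).det) := by
    constructor
    · simpa using hneg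
    · simp [ContinuousLinearMap.det]
  obtain ⟨t, ht, h0⟩ := h this
  refine aux_det_ne (t • T) ?_ h0
  rw [norm_smul, Real.norm_eq_abs, abs_of_nonneg ht.1]
  nlinarith [norm_nonneg T, ht.1, ht.2]

theorem aux_bij {E : Type*} [NormedAddCommGroup E] [NormedSpace ℝ E] [CompleteSpace E]
    (k : E → E) (K : NNReal) (hK : K < 1) (hk : LipschitzWith K k) :
    Function.Bijective (fun z => z + k z) := by
  constructor
  · intro a b hab
    have hab : a + k a = b + k b := hab
    have h1 : a - b = k b - k a := by
      rw [sub_eq_sub_iff_add_eq_add, hab, add_comm]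
    have h2 := hk.dist_le_mul b a
    rw [dist_eq_norm, dist_eq_norm, ← h1, norm_sub_rev b a] at h2
    have hK' : (K : ℝ) < 1 := hK
    have : ‖a - b‖ = 0 := by nlinarith [norm_nonneg (a - b)]
    exact sub_eq_zero.1 (norm_eq_zero.1 this)
  · intro y
    have hc : ContractingWith K (fun z => y - k z) :=
      ⟨hK, LipschitzWith.of_dist_le_mul fun a b => by
        rw [dist_sub_left]; exact hk.dist_le_mul a b⟩
    refine ⟨hc.fixedPoint, ?_⟩
    have := hc.fixedPoint_isFixedPt
    have h : y - k (hc.fixedPoint) = hc.fixedPoint := this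
    show hc.fixedPoint + k hc.fixedPoint = y
    rw [← h]
    nth_rewrite 2 [h]
    abel

theorem aux_vol {d : ℕ} (R : ℝ)
    (k : EuclideanSpace ℝ (Fin d) → EuclideanSpace ℝ (Fin d))
    (K : NNReal) (hK : K < 1) (hk : LipschitzWith K k)
    (hk0 : ∀ z, R ≤ ‖z‖ → k z = 0) (hd : DifferentiableOn ℝ k (ball 0 R)) :
    IntegrableOn (fun z => (ContinuousLinearMap.id ℝ (EuclideanSpace ℝ (Fin d)) + fderiv ℝ k z).det) (ball 0 R) ∧
    ∫ z in ball 0 R, (ContinuousLinearMap.id ℝ (EuclideanSpace ℝ (Fin d)) + fderiv ℝ k z).det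
      = volume.real (ball (0 : EuclideanSpace ℝ (Fin d)) R) := by
  have hb := aux_bij k K hK hk
  have himg : (fun z => z + k z) '' (ball 0 R) = ball 0 R := by
    have h1 : (fun z => z + k z) '' (ball 0 R)ᶜ = (ball 0 R)ᶜ := by
      have : EqOn (fun z => z + k z) id (ball 0 R)ᶜ := by
        intro z hz
        have : R ≤ ‖z‖ := by simpa using hz
        simp [hk0 z this]
      rw [this.image_eq, image_id]
    rw [image_compl_eq hb] at h1
    exact compl_injective h1
  have hder : ∀ z ∈ ball (0 : EuclideanSpace ℝ (Fin d)) R, HasFDerivWithinAt (fun z => z + k z)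
      (ContinuousLinearMap.id ℝ (EuclideanSpace ℝ (Fin d)) + fderiv ℝ k z) (ball 0 R) z := by
    intro z hz
    have := (hd.differentiableAt (isOpen_ball.mem_nhds hz)).hasFDerivAt
    exact ((hasFDerivAt_id z).add this).hasFDerivWithinAt
  have habs : ∀ z, |(ContinuousLinearMap.id ℝ (EuclideanSpace ℝ (Fin d)) + fderiv ℝ k z).det|
      = (ContinuousLinearMap.id ℝ (EuclideanSpace ℝ (Fin d)) + fderiv ℝ k z).det := by
    intro z
    refine abs_of_pos (aux_det_pos _ ?_)
    exact lt_of_le_of_lt (norm_fderiv_le_of_lipschitz ℝ hk) hK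
  have h1 := integrableOn_image_iff_integrableOn_abs_det_fderiv_smul volume measurableSet_ball
    hder hb.1.injOn (fun _ => (1 : ℝ))
  have h2 := integral_image_eq_integral_abs_det_fderiv_smul volume measurableSet_ball
    hder hb.1.injOn (fun _ => (1 : ℝ))
  rw [himg] at h1 h2
  simp only [habs, smul_eq_mul, mul_one] at h1 h2
  refine ⟨h1.1 ?_, ?_⟩
  · exact integrableOn_const (measure_ball_lt_top.ne)
  · rw [← h2]; simp

theorem aux_noretract {d : ℕ} (R : ℝ) (hR : 0 < R)
    (g : EuclideanSpace ℝ (Fin d) → EuclideanSpace ℝ (Fin d))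
    (L : NNReal) (hg : LipschitzWith L g)
    (hg0 : ∀ z, R ≤ ‖z‖ → g z = 0) (hd : DifferentiableOn ℝ g (ball 0 R))
    (hn : ∀ z ∈ ball (0 : EuclideanSpace ℝ (Fin d)) R, ‖z + g z‖ = R) : False := by
  let v : ℕ → ℝ := fun i => ((L : ℝ) + 1 + i)⁻¹
  let s := Finset.range (d + 1)
  have hvinj : Set.InjOn v s := by
    intro i _ j _ h
    have := inv_injective h
    simpa using this
  have hv0 : ∀ i, 0 < v i := fun i => by positivity
  have hvol : ∀ i, IntegrableOn (fun z => (ContinuousLinearMap.id ℝ (EuclideanSpace ℝ (Fin d)) + v i • fderiv ℝ g z).det)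
      (ball 0 R) ∧
    ∫ z in ball 0 R, (ContinuousLinearMap.id ℝ (EuclideanSpace ℝ (Fin d)) + v i • fderiv ℝ g z).det
      = volume.real (ball (0 : EuclideanSpace ℝ (Fin d)) R) := by
    intro i
    have hlip : LipschitzWith (Real.toNNReal (v i) * L) (fun z => v i • g z) := by
      refine LipschitzWith.of_dist_le_mul fun a b => ?_
      rw [dist_smul₀, NNReal.coe_mul, Real.coe_toNNReal _ (hv0 i).le, Real.norm_eq_abs,
        abs_of_pos (hv0 i), mul_assoc]
      gcongr
      exact hg.dist_le_mul a b
    have h := aux_vol R (fun z => v i • g z) _ ?_ hlip (fun z hz => by simp [hg0 z hz])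
      (hd.const_smul (v i))
    · have e : ∀ z, fderiv ℝ (fun z => v i • g z) z = v i • fderiv ℝ g z := fun z =>
        congrFun (fderiv_const_smul_field (f := g) (v i)) z
      simpa only [e] using h
    · rw [← NNReal.coe_lt_coe, NNReal.coe_mul, Real.coe_toNNReal _ (hv0 i).le]
      simp only [v, NNReal.coe_one]
      rw [inv_mul_lt_iff₀ (by positivity)]
      have : (0 : ℝ) ≤ i := Nat.cast_nonneg i
      linarith
  have hzero : ∀ z ∈ ball (0 : EuclideanSpace ℝ (Fin d)) R,
      (ContinuousLinearMap.id ℝ (EuclideanSpace ℝ (Fin d)) + fderiv ℝ g z).det = 0 := by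
    intro z hz
    by_contra hne
    have hsurj : Function.Surjective (ContinuousLinearMap.id ℝ (EuclideanSpace ℝ (Fin d)) + fderiv ℝ g z) := by
      have := LinearMap.isUnit_iff_isUnit_det
        (ContinuousLinearMap.id ℝ (EuclideanSpace ℝ (Fin d)) + fderiv ℝ g z).toLinearMap
      have h2 := this.2 (isUnit_iff_ne_zero.2 hne)
      exact ((Module.End.isUnit_iff _).1 h2).2
    obtain ⟨w, hw⟩ := hsurj (z + g z)
    have hder : HasFDerivAt (fun z => z + g z) (ContinuousLinearMap.id ℝ (EuclideanSpace ℝ (Fin d)) + fderiv ℝ g z) z :=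
      (hasFDerivAt_id z).add (hd.differentiableAt (isOpen_ball.mem_nhds hz)).hasFDerivAt
    have h1 := hder.norm_sq
    have h2 : (fun z => ‖z + g z‖ ^ 2) =ᶠ[nhds z] fun _ => R ^ 2 := by
      filter_upwards [isOpen_ball.mem_nhds hz] with u hu
      rw [hn u hu]
    have h3 := h1.unique ((hasFDerivAt_const (R ^ 2) z).congr_of_eventuallyEq h2)
    have h4 := congrArg (fun f => f w) h3
    simp only [ContinuousLinearMap.smul_apply, ContinuousLinearMap.comp_apply, hw,
      innerSL_apply_apply, real_inner_self_eq_norm_sq, hn z hz, ContinuousLinearMap.zero_apply] at h4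
    have : 0 < R ^ 2 := by positivity
    simp at h4
    exact hR.ne' h4
  have key : ∫ z in ball (0 : EuclideanSpace ℝ (Fin d)) R,
      (ContinuousLinearMap.id ℝ (EuclideanSpace ℝ (Fin d)) + fderiv ℝ g z).det
      = volume.real (ball (0 : EuclideanSpace ℝ (Fin d)) R) := by
    simp_rw [fun z => aux_det_interp (fderiv ℝ g z) s v hvinj (by simp [s])]
    rw [integral_finset_sum]
    · simp_rw [integral_mul_const, fun i => (hvol i).2]
      rw [← Finset.mul_sum, ← Polynomial.eval_finset_sum, Lagrange.sum_basis hvinj (by simp [s])]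
      simp
    · intro i _
      exact (hvol i).1.mul_const _
  rw [setIntegral_congr_fun measurableSet_ball hzero] at key
  simp only [integral_zero] at key
  have : 0 < volume.real (ball (0 : EuclideanSpace ℝ (Fin d)) R) :=
    ENNReal.toReal_pos (measure_ball_pos _ _ hR).ne' measure_ball_lt_top.ne
  linarith

theorem aux_brouwer {d : ℕ} (R m : ℝ) (hm : 0 ≤ m) (hmR : m < R)
    (u : EuclideanSpace ℝ (Fin d) → EuclideanSpace ℝ (Fin d))
    (hu : ContinuousOn u (closedBall 0 R)) (hum : ∀ z ∈ closedBall 0 R, ‖u z‖ ≤ m) :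
    ∃ z ∈ closedBall 0 R, u z = z := by
  by_contra! hno
  have hR : 0 < R := lt_of_le_of_lt hm hmR
  let σ : ℝ → EuclideanSpace ℝ (Fin d) → EuclideanSpace ℝ (Fin d) :=
    fun c y => (max ‖y‖ c)⁻¹ • y
  have hσlip : ∀ c, 0 < c → LipschitzWith (Real.toNNReal (2 / c)) (σ c) :=
    fun c hc => aux_sigma_lip c hc
  have hσbig : ∀ c y, c ≤ ‖y‖ → σ c y = ‖y‖⁻¹ • y := by
    intro c y h
    simp only [σ, max_eq_left h]
  have hσsmall : ∀ c y, ‖y‖ ≤ c → σ c y = c⁻¹ • y := by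
    intro c y h
    simp only [σ, max_eq_right h]
  obtain ⟨η, hη, hηle⟩ : ∃ η > 0, ∀ z ∈ closedBall (0 : EuclideanSpace ℝ (Fin d)) R,
      η ≤ ‖z - u z‖ := by
    have hc : ContinuousOn (fun z => ‖z - u z‖) (closedBall 0 R) := (continuousOn_id.sub hu).norm
    obtain ⟨z0, hz0, hmin⟩ := (isCompact_closedBall (0 : EuclideanSpace ℝ (Fin d)) R).exists_isMinOn
      ⟨0, by simp [hR.le]⟩ hc
    refine ⟨‖z0 - u z0‖, norm_pos_iff.2 (sub_ne_zero.2 (hno z0 hz0).symm), fun z hz => hmin hz⟩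
  let P : EuclideanSpace ℝ (Fin d) → EuclideanSpace ℝ (Fin d) := fun z => R • σ R z
  have hPc : Continuous P := (hσlip R hR).continuous.const_smul R
  have hPmem : ∀ z, P z ∈ closedBall (0 : EuclideanSpace ℝ (Fin d)) R := by
    intro z
    have h0 : 0 < max ‖z‖ R := lt_of_lt_of_le hR (le_max_right _ _)
    simp only [P, σ, mem_closedBall_zero_iff, norm_smul, Real.norm_eq_abs, abs_of_pos hR,
      abs_of_pos (inv_pos.2 h0)]
    have : (max ‖z‖ R)⁻¹ * ‖z‖ ≤ 1 := by
      rw [inv_mul_le_iff₀ h0]; simp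
    nlinarith
  have hPid : ∀ z, ‖z‖ ≤ R → P z = z := by
    intro z hz
    simp only [P, hσsmall R z hz, smul_smul, mul_inv_cancel₀ hR.ne', one_smul]
  have hUc : Continuous (fun z => u (P z)) := hu.comp_continuous hPc hPmem
  obtain ⟨ε, hε, hε1, hε2⟩ : ∃ ε > 0, 4 * ε ≤ η ∧ 4 * ε ≤ R - m :=
    ⟨min η (R - m) / 4, by have := lt_min hη (sub_pos.2 hmR); positivity,
      by linarith [min_le_left η (R - m)], by linarith [min_le_right η (R - m)]⟩
  obtain ⟨v, hv, hvU, -⟩ := hUc.exists_contDiff_approx 1 (ε := fun _ => ε) continuous_const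
    (fun _ => hε)
  have hvm : ∀ z, ‖v z‖ ≤ m + ε := by
    intro z
    have h1 := hvU z
    rw [dist_eq_norm] at h1
    have h2 := hum _ (hPmem z)
    have h3 := norm_le_norm_add_norm_sub' (v z) (u (P z))
    linarith
  let χ : ContDiffBump (0 : EuclideanSpace ℝ (Fin d)) :=
    ⟨m + 2 * ε, R, by linarith, by linarith⟩
  let w : EuclideanSpace ℝ (Fin d) → EuclideanSpace ℝ (Fin d) := fun z => χ z • v z
  have hwC : ContDiff ℝ 1 w := χ.contDiff.smul hv
  obtain ⟨Lw, hLw⟩ := ContDiff.lipschitzWith_of_hasCompactSupport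
    (χ.hasCompactSupport.smul_right : HasCompactSupport w) hwC one_ne_zero
  let q : EuclideanSpace ℝ (Fin d) → EuclideanSpace ℝ (Fin d) := fun z => z - w z
  have hqL : LipschitzWith (1 + Lw) q := LipschitzWith.id.sub hLw
  have hqd : Differentiable ℝ q := differentiable_id.sub (hwC.differentiable one_ne_zero)
  have hqlow : ∀ z, ε ≤ ‖q z‖ := by
    intro z
    rcases le_total ‖z‖ (m + 2 * ε) with hz | hz
    · have hzR : ‖z‖ ≤ R := by linarith
      have h1 : χ z = 1 := χ.one_of_mem_closedBall (by simpa using hz)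
      have h2 := hηle z (by simpa using hzR)
      have h3 := hvU z
      rw [hPid z hzR, dist_eq_norm] at h3
      have h4 : z - u z = q z + (v z - u z) := by simp [q, w, h1]
      have h5 := norm_add_le (q z) (v z - u z)
      rw [← h4] at h5
      linarith
    · have h1 : ‖w z‖ ≤ m + ε := by
        simp only [w, norm_smul, Real.norm_eq_abs, abs_of_nonneg χ.nonneg]
        calc χ z * ‖v z‖ ≤ 1 * ‖v z‖ := by gcongr; exact χ.le_one
          _ ≤ _ := by simpa using hvm z
      have h2 := norm_sub_norm_le z (w z)
      show ε ≤ ‖z - w z‖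
      linarith
  have hq0 : ∀ z, q z ≠ 0 := fun z h => by
    have := hqlow z
    rw [h, norm_zero] at this
    linarith
  have hqid : ∀ z, R ≤ ‖z‖ → q z = z := by
    intro z hz
    have : χ z = 0 := χ.zero_of_le_dist (by simpa using hz)
    simp [q, w, this]
  have hgL := (((hσlip ε hε).comp hqL).sub (hσlip R hR))
  have hgL2 := (lipschitzWith_smul (β := EuclideanSpace ℝ (Fin d)) R).comp hgL
  refine aux_noretract R hR (fun z => R • (σ ε (q z) - σ R z)) _ hgL2 ?_ ?_ ?_
  · intro z hz
    show R • (σ ε (q z) - σ R z) = 0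
    rw [hqid z hz, hσbig R z hz, hσbig ε z (by linarith), sub_self, smul_zero]
  · have : DifferentiableOn ℝ (fun z => R • (‖q z‖⁻¹ • q z - R⁻¹ • z)) (ball 0 R) := by
      apply Differentiable.differentiableOn
      have h1 : Differentiable ℝ (fun z => ‖q z‖⁻¹) := (hqd.norm ℝ hq0).inv
        (fun z => norm_ne_zero_iff.2 (hq0 z))
      exact ((h1.smul hqd).sub (differentiable_id.const_smul R⁻¹)).const_smul R
    refine this.congr fun z hz => ?_
    have hz' : ‖z‖ < R := by simpa using hz
    rw [hσbig ε _ (hqlow z), hσsmall R z hz'.le]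
  · intro z hz
    have hz' : ‖z‖ < R := by simpa using hz
    rw [hσbig ε _ (hqlow z), hσsmall R z hz'.le, smul_sub, smul_smul R R⁻¹,
      mul_inv_cancel₀ hR.ne', one_smul, add_sub_cancel, norm_smul, norm_smul, norm_inv, norm_norm,
      inv_mul_cancel₀ (norm_ne_zero_iff.2 (hq0 z)), mul_one, Real.norm_eq_abs, abs_of_pos hR]



/-- Let `d ≥ 1`, let `Ω ⊂ ℝ^d` be a bounded open set, and let `y` be continuous on
`closure(Ω)`. Let `x ∈ Ω` be such that `|y(z) − z| < dist(x, ∂Ω)` for every `z ∈ closure(Ω)`.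
Then `x ∈ y(Ω)`. -/
theorem stmt17 (d : ℕ) (hd : 1 ≤ d) (Ω : Set (EuclideanSpace ℝ (Fin d)))
    (hΩopen : IsOpen Ω) (hΩbdd : Bornology.IsBounded Ω)
    (y : EuclideanSpace ℝ (Fin d) → EuclideanSpace ℝ (Fin d))
    (hy : ContinuousOn y (closure Ω))
    (x : EuclideanSpace ℝ (Fin d)) (hx : x ∈ Ω)
    (hclose : ∀ z ∈ closure Ω, ‖y z - z‖ < Metric.infDist x (frontier Ω)) :
    x ∈ y '' Ω := by
  set r := Metric.infDist x (frontier Ω) with hr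
  have hball : ball x r ⊆ Ω := by
    have hdis : Disjoint (ball x r) (frontier Ω) := Metric.disjoint_ball_infDist
    have hr0 : 0 < r := lt_of_le_of_lt (norm_nonneg _) (hclose x (subset_closure hx))
    have hpre : IsPreconnected (ball x r) := (convex_ball x r).isPreconnected
    have hcov : ball x r ⊆ Ω ∪ (closure Ω)ᶜ := by
      intro z hz
      by_cases h : z ∈ closure Ω
      · left
        by_contra hzΩ
        exact Set.disjoint_left.1 hdis hz (by
          rw [hΩopen.frontier_eq]; exact ⟨h, hzΩ⟩)
      · exact Or.inr h
    refine hpre.subset_left_of_subset_union hΩopen isClosed_closure.isOpen_compl ?_ hcov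
      ⟨x, mem_ball_self hr0, hx⟩
    exact Set.disjoint_left.2 fun z hz h => h (subset_closure hz)
  have hcomp : IsCompact (closure Ω) := hΩbdd.isCompact_closure
  obtain ⟨z0, hz0, hmax⟩ := hcomp.exists_isMaxOn ⟨x, subset_closure hx⟩
    ((hy.sub continuousOn_id).norm)
  have hmr : ‖y z0 - z0‖ < r := hclose z0 hz0
  obtain ⟨R, hR1, hR2⟩ := exists_between hmr
  have hmaps : ∀ z ∈ closedBall (0 : EuclideanSpace ℝ (Fin d)) R, x + z ∈ Ω := by
    intro z hz
    apply hball
    have : ‖z‖ ≤ R := by simpa using hz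
    simp only [mem_ball, dist_eq_norm, add_sub_cancel_left]
    linarith
  obtain ⟨z, hz, hfix⟩ := aux_brouwer R ‖y z0 - z0‖ (norm_nonneg _) hR1
    (fun z => (x + z) - y (x + z))
    ((by fun_prop : Continuous fun z => x + z).continuousOn.sub
      (hy.comp (by fun_prop : Continuous fun z => x + z).continuousOn
        (fun z hz => subset_closure (hmaps z hz))))
    (fun z hz => by
      rw [norm_sub_rev]
      exact hmax (subset_closure (hmaps z hz)))
  refine ⟨x + z, hmaps z hz, ?_⟩
  have h : x + z - y (x + z) = z := hfix
  have h2 : y (x + z) = x + z - z := by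
    rw [eq_sub_iff_add_eq, add_comm]
    exact (sub_eq_iff_eq_add.1 h).symm
  rw [h2, add_sub_cancel_right]
end
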